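/- arXiv:1702.02608 — 3 statements merged into one kernel-verified Lean document; each statement's English description precedes it below -/
import Mathlib

section
/- Let n ≥ 3 be an integer and a > 0 a real number. The function t ↦ 1/√((t/a)^{2n−2} − 1) is integrable on the interval (a, ∞); in particular the improper integral x(a,∞) = ∫_a^∞ dt/√((t/a)^{2n−2} − 1), giving the total horizontal extent of the generating curve of the Euclidean catenoid, is finite. -/
open MeasureTheory Real Set

/-!
After rescaling to `a = 1`, write `1 / √(u ^ p - 1) = u ^ (-p / 2) / √(1 - u ^ (-p))`. Replacing the
last exponent `-p` by `-q` with `q = p / 2 - 1 ≤ p` only enlarges the right-hand side, and turns it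
into `2 / q` times the derivative of `√(1 - u ^ (-q))`, which increases from `0` to `1` on `(1, ∞)`.
The condition `p > 2` is what makes `q` positive.
-/

lemma one_sub_rpow_neg_pos {q u : ℝ} (hq : 0 < q) (hu : 1 < u) : 0 < 1 - u ^ (-q) :=
  sub_pos.2 (rpow_lt_one_of_one_lt_of_neg hu (neg_lt_zero.2 hq))

lemma hasDerivAt_sqrt_one_sub_rpow_neg {q u : ℝ} (hq : 0 < q) (hu : 1 < u) :
    HasDerivAt (fun v : ℝ => √(1 - v ^ (-q))) (q / 2 * (u ^ (-q - 1) / √(1 - u ^ (-q)))) u := by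
  have hu₀ : u ≠ 0 := (zero_lt_one.trans hu).ne'
  have hpos := one_sub_rpow_neg_pos hq hu
  refine (((hasDerivAt_rpow_const (.inl hu₀)).const_sub 1).sqrt hpos.ne').congr_deriv ?_
  field_simp

lemma integrableOn_Ioi_rpow_div_sqrt_one_sub_rpow_neg {q : ℝ} (hq : 0 < q) :
    IntegrableOn (fun u : ℝ => u ^ (-q - 1) / √(1 - u ^ (-q))) (Ioi 1) := by
  have hcont : ContinuousWithinAt (fun u : ℝ => √(1 - u ^ (-q))) (Ici 1) 1 :=
    (continuousAt_const.sub
      (continuousAt_rpow_const 1 (-q) (.inl one_ne_zero))).sqrt.continuousWithinAt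
  have hlim : Filter.Tendsto (fun u : ℝ => √(1 - u ^ (-q))) Filter.atTop (nhds √(1 - 0)) :=
    ((tendsto_rpow_neg_atTop hq).const_sub 1).sqrt
  have hderiv : IntegrableOn (fun u : ℝ => q / 2 * (u ^ (-q - 1) / √(1 - u ^ (-q)))) (Ioi 1) :=
    integrableOn_Ioi_deriv_of_nonneg hcont (fun u hu => hasDerivAt_sqrt_one_sub_rpow_neg hq hu)
      (fun u hu => by have := zero_lt_one.trans (mem_Ioi.1 hu); positivity) hlim
  exact (integrable_const_mul_iff (half_pos hq).ne'.isUnit _).1 hderiv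

lemma one_div_sqrt_rpow_sub_one_le {p q u : ℝ} (hq : 0 < q) (hqp : q ≤ p) (hu : 1 < u) :
    1 / √(u ^ p - 1) ≤ u ^ (-(p / 2)) / √(1 - u ^ (-q)) := by
  have hu₀ : 0 < u := zero_lt_one.trans hu
  have hpos := one_sub_rpow_neg_pos hq hu
  have hfactor : u ^ p - 1 = (u ^ (p / 2)) ^ 2 * (1 - u ^ (-p)) := by
    rw [← rpow_mul_natCast hu₀.le, mul_sub, ← rpow_add hu₀]
    norm_num
  calc 1 / √(u ^ p - 1) = u ^ (-(p / 2)) / √(1 - u ^ (-p)) := by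
        rw [hfactor, sqrt_mul (sq_nonneg _), sqrt_sq (by positivity), rpow_neg hu₀.le (p / 2),
          one_div, mul_inv, ← div_eq_mul_inv]
    _ ≤ u ^ (-(p / 2)) / √(1 - u ^ (-q)) := by
        have hexp : u ^ (-p) ≤ u ^ (-q) := rpow_le_rpow_of_exponent_le hu.le (neg_le_neg hqp)
        gcongr

lemma integrableOn_Ioi_one_div_sqrt_rpow_sub_one {p : ℝ} (hp : 2 < p) :
    IntegrableOn (fun u : ℝ => 1 / √(u ^ p - 1)) (Ioi 1) := by
  have hq : 0 < p / 2 - 1 := by linarith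
  refine (integrableOn_Ioi_rpow_div_sqrt_one_sub_rpow_neg hq).mono'
    (Measurable.aestronglyMeasurable (by fun_prop)) ?_
  refine ae_restrict_of_forall_mem measurableSet_Ioi fun u hu => ?_
  rw [norm_of_nonneg (by positivity), show -(p / 2 - 1) - 1 = -(p / 2) by ring]
  exact one_div_sqrt_rpow_sub_one_le hq (by linarith) hu

theorem euclidean_catenoid_integrable_general {p a : ℝ} (hp : 2 < p) (ha : 0 < a) :
    IntegrableOn (fun t : ℝ => 1 / √((t / a) ^ p - 1)) (Ioi a) := by
  have hscale := integrableOn_Ioi_comp_mul_right_iff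
    (fun u : ℝ => 1 / √(u ^ p - 1)) a (inv_pos.2 ha)
  rw [mul_inv_cancel₀ ha.ne'] at hscale
  simpa only [div_eq_mul_inv] using hscale.2 (integrableOn_Ioi_one_div_sqrt_rpow_sub_one hp)

/-- For an integer `n ≥ 3` and a real `a > 0`, the function
`t ↦ 1/√((t/a)^(2n−2) − 1)` is integrable on `(a, ∞)`; in particular the
improper integral giving the total horizontal extent of the generating curve
of the Euclidean catenoid is finite. -/
theorem euclidean_catenoid_integrable (n : ℕ) (hn : 3 ≤ n) (a : ℝ) (ha : 0 < a) :
    IntegrableOn (fun t : ℝ => 1 / Real.sqrt ((t / a) ^ (2 * n - 2) - 1))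
      (Set.Ioi a) := by
  have hp : (2 : ℝ) < (2 * n - 2 : ℕ) := by exact_mod_cast (by omega : 2 < 2 * n - 2)
  simpa only [rpow_natCast] using euclidean_catenoid_integrable_general hp ha
end

section
/- Let n ≥ 2 be an integer, c ∈ ℝ and a > 0. Let x be a twice-differentiable positive real-valued function on an open interval I ⊆ ℝ satisfying the catenoid profile equations (x′(s))² = 1 − c·x(s)² − a²·x(s)^{2−2n} and x″(s) = −c·x(s) + a²(n−1)·x(s)^{1−2n} for all s ∈ I. Define φ(s) = a·√(n(n−1))·x(s)^{−n}. Then for all s ∈ I the Simons equation holds in the form φ·(φ″ + (n−1)·(x′/x)·φ′) + φ⁴ = (2/n)·(φ′)² + n·c·φ², where φ″ + (n−1)(x′/x)φ′ is the Laplacian of the rotationally invariant function φ on the catenoid. -/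
open Real

/-!
Let `h = x' / x`. Since `φ` is a multiple of `x ^ (-n)`, it satisfies `φ' = -n φ h`, and because
`h' = x'' / x - h ^ 2` the Laplacian of `φ` is `-n φ (x'' / x - 2 h ^ 2)`. Multiplying by `φ`, the
term in `h ^ 2` becomes `(2 / n) φ' ^ 2`. The second-order profile equation says that
`φ ^ 2 = n (c + x'' / x)`, so `φ ^ 4` cancels the term in `x''` and leaves `n c φ ^ 2`.
-/

open scoped Topology

section LogarithmicDerivative

variable {𝕜 : Type*} [NontriviallyNormedField 𝕜] {x x' φ φ' : 𝕜 → 𝕜} {x'' s : 𝕜}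

theorem hasDerivAt_of_eventually_eq_mul_logDeriv {k : 𝕜} (hx₀ : x s ≠ 0)
    (hx : HasDerivAt x (x' s) s) (hx' : HasDerivAt x' x'' s) (hφ : HasDerivAt φ (φ' s) s)
    (hlog : ∀ᶠ t in 𝓝 s, φ' t = k * φ t * (x' t / x t)) :
    HasDerivAt φ' (k * φ s * (x'' / x s + (k - 1) * (x' s / x s) ^ 2)) s := by
  have hprod := ((hφ.const_mul k).mul (hx'.div hx hx₀)).congr_of_eventuallyEq hlog
  refine hprod.congr_deriv ?_
  rw [Pi.div_apply, hlog.self_of_nhds]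
  field_simp
  ring

theorem mul_radial_laplacian_of_eventually_eq_mul_logDeriv {n φ'' : 𝕜} (hn : n ≠ 0)
    (hx₀ : x s ≠ 0) (hx : HasDerivAt x (x' s) s) (hx' : HasDerivAt x' x'' s)
    (hφ : HasDerivAt φ (φ' s) s) (hφ' : HasDerivAt φ' φ'' s)
    (hlog : ∀ᶠ t in 𝓝 s, φ' t = -n * φ t * (x' t / x t)) :
    φ s * (φ'' + (n - 1) * (x' s / x s) * φ' s) =
      (2 / n) * φ' s ^ 2 - n * (x'' / x s) * φ s ^ 2 := by
  rw [hφ'.unique (hasDerivAt_of_eventually_eq_mul_logDeriv hx₀ hx hx' hφ hlog),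
    hlog.self_of_nhds]
  field_simp
  ring

end LogarithmicDerivative

theorem hasDerivAt_const_mul_rpow {f : ℝ → ℝ} {f' s : ℝ} (C p : ℝ) (hf : HasDerivAt f f' s)
    (hs : f s ≠ 0) :
    HasDerivAt (fun t ↦ C * f t ^ p) (p * (C * f s ^ p) * (f' / f s)) s := by
  refine ((hf.rpow_const (Or.inl hs)).const_mul C).congr_deriv ?_
  rw [rpow_sub_one hs]
  ring

theorem sq_mul_sqrt_mul_rpow_neg_of_profile_eq {n c a r r'' : ℝ} (hn : 0 ≤ n * (n - 1))
    (hr : 0 < r) (hode : r'' = -c * r + a ^ 2 * (n - 1) * r ^ (1 - 2 * n)) :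
    (a * √(n * (n - 1)) * r ^ (-n)) ^ 2 = n * (c + r'' / r) := by
  have hpow : r ^ (1 - 2 * n) = r * (r ^ (-n)) ^ 2 := by
    rw [rpow_sub hr, rpow_one, mul_comm 2 n, rpow_mul hr.le, rpow_two, rpow_neg hr.le, inv_pow,
      div_eq_mul_inv]
  rw [hode, hpow, mul_pow, mul_pow, sq_sqrt hn]
  field_simp
  ring

theorem catenoid_satisfies_simons_equation_general {n c a : ℝ} (hn : n ≠ 0)
    (hn' : 0 ≤ n * (n - 1)) {I : Set ℝ} (hI : IsOpen I) {x x' x'' : ℝ → ℝ}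
    (hx_pos : ∀ s ∈ I, 0 < x s)
    (hx' : ∀ s ∈ I, HasDerivAt x (x' s) s)
    (hx'' : ∀ s ∈ I, HasDerivAt x' (x'' s) s)
    (hode : ∀ s ∈ I, x'' s = -c * x s + a ^ 2 * (n - 1) * x s ^ (1 - 2 * n))
    {φ φ' φ'' : ℝ → ℝ}
    (hφ : ∀ s ∈ I, φ s = a * √(n * (n - 1)) * x s ^ (-n))
    (hφ' : ∀ s ∈ I, HasDerivAt φ (φ' s) s)
    (hφ'' : ∀ s ∈ I, HasDerivAt φ' (φ'' s) s) :
    ∀ s ∈ I,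
      φ s * (φ'' s + (n - 1) * (x' s / x s) * φ' s) + φ s ^ 4 =
        (2 / n) * (φ' s) ^ 2 + n * c * φ s ^ 2 := by
  intro s hs
  have hlog : ∀ t ∈ I, φ' t = -n * φ t * (x' t / x t) := fun t ht ↦ by
    have hpow := hasDerivAt_const_mul_rpow (a * √(n * (n - 1))) (-n) (hx' t ht) (hx_pos t ht).ne'
    rw [hφ t ht]
    exact (hφ' t ht).unique
      (hpow.congr_of_eventuallyEq (Filter.eventually_of_mem (hI.mem_nhds ht) hφ))
  have hlaplacian := mul_radial_laplacian_of_eventually_eq_mul_logDeriv hn (hx_pos s hs).ne'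
    (hx' s hs) (hx'' s hs) (hφ' s hs) (hφ'' s hs) (Filter.eventually_of_mem (hI.mem_nhds hs) hlog)
  have hsq : φ s ^ 2 = n * (c + x'' s / x s) :=
    hφ s hs ▸ sq_mul_sqrt_mul_rpow_neg_of_profile_eq hn' (hx_pos s hs) (hode s hs)
  linear_combination hlaplacian + φ s ^ 2 * hsq

/-- Let `n ≥ 2`, `c ∈ ℝ`, `a > 0`, and let `x` be a twice-differentiable
positive function on an open set `I` satisfying the catenoid profile equations
`(x′)² = 1 − c x² − a² x^(2−2n)` and `x″ = −c x + a²(n−1) x^(1−2n)`.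
With `φ = a √(n(n−1)) x^(−n)`, the Simons equation
`φ·(φ″ + (n−1)(x′/x)φ′) + φ⁴ = (2/n)(φ′)² + n c φ²` holds on `I`. -/
theorem catenoid_satisfies_simons_equation
    (n : ℕ) (hn : 2 ≤ n) (c : ℝ) (a : ℝ) (ha : 0 < a)
    (I : Set ℝ) (hI : IsOpen I) (hI' : I.OrdConnected)
    (x x' x'' : ℝ → ℝ)
    (hx_pos : ∀ s ∈ I, 0 < x s)
    (hx' : ∀ s ∈ I, HasDerivAt x (x' s) s)
    (hx'' : ∀ s ∈ I, HasDerivAt x' (x'' s) s)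
    (hode1 : ∀ s ∈ I, (x' s) ^ 2 = 1 - c * x s ^ 2 - a ^ 2 * x s ^ ((2 : ℤ) - 2 * n))
    (hode2 : ∀ s ∈ I, x'' s = -c * x s + a ^ 2 * (n - 1) * x s ^ ((1 : ℤ) - 2 * n))
    (φ φ' φ'' : ℝ → ℝ)
    (hφ : ∀ s, φ s = a * Real.sqrt (n * (n - 1)) * x s ^ (-(n : ℤ)))
    (hφ' : ∀ s ∈ I, HasDerivAt φ (φ' s) s)
    (hφ'' : ∀ s ∈ I, HasDerivAt φ' (φ'' s) s) :
    ∀ s ∈ I,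
      φ s * (φ'' s + (n - 1) * (x' s / x s) * φ' s) + φ s ^ 4 =
        (2 / n) * (φ' s) ^ 2 + n * c * φ s ^ 2 := by
  have hn₁ : (1 : ℝ) ≤ n := by exact_mod_cast one_le_two.trans hn
  exact catenoid_satisfies_simons_equation_general (by positivity)
    (mul_nonneg n.cast_nonneg (sub_nonneg.2 hn₁)) hI hx_pos hx' hx''
    (by simpa [← rpow_intCast] using hode2) (fun s _ ↦ by simpa [← rpow_intCast] using hφ s)
    hφ' hφ''
end

section
/- Let n ≥ 2 be an integer and let h be a twice-differentiable real-valued function on an open interval I ⊆ ℝ with 0 < h(θ) < 1 for all θ ∈ I, satisfying the Otsuki equation n·h·(1 − h²)·h″ + (h′)² + (1 − h²)·(n·h² − 1) = 0 on I. Then the function θ ↦ (1 − h(θ)² − h′(θ)²)^n · h(θ)² / (1 − h(θ)²) is constant on I. -/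
open Real

/-!
Put `E = 1 - h ^ 2 - h' ^ 2` and `g = h ^ 2 / (1 - h ^ 2)`. The Otsuki equation is the same as
`n h (1 - h ^ 2) (h + h'') = E`, and `E' = -2 h' (h + h'')`, so it is a linear equation of first
order for `E`. With `g' = 2 h h' / (1 - h ^ 2) ^ 2` it becomes `n E' g + E g' = 0`, whose
left-hand side, multiplied by `E ^ (n - 1)`, is the derivative of `E ^ n g`.
-/

theorem otsuki_eq_iff {R : Type*} [CommRing R] {n x y z : R} :
    n * x * (1 - x ^ 2) * z + y ^ 2 + (1 - x ^ 2) * (n * x ^ 2 - 1) = 0 ↔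
      n * x * (1 - x ^ 2) * (x + z) = 1 - x ^ 2 - y ^ 2 := by
  constructor <;> intro hxyz <;> linear_combination hxyz

section CommRing

variable {𝕜 A : Type*} [NontriviallyNormedField 𝕜] [NormedCommRing A] [NormedAlgebra 𝕜 A]

theorem hasDerivAt_pow_mul_zero {f g : 𝕜 → A} {f' g' : A} {t : 𝕜} {n : ℕ} (hn : n ≠ 0)
    (hf : HasDerivAt f f' t) (hg : HasDerivAt g g' t) (hfg : n * f' * g t + f t * g' = 0) :
    HasDerivAt (fun s => f s ^ n * g s) 0 t := by
  refine ((hf.fun_pow n).fun_mul hg).congr_deriv ?_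
  rw [← mul_pow_sub_one hn (f t)]
  linear_combination f t ^ (n - 1) * hfg

theorem hasDerivAt_one_sub_sq_sub_sq {h k : 𝕜 → A} {k' : A} {t : 𝕜}
    (hh : HasDerivAt h (k t) t) (hk : HasDerivAt k k' t) :
    HasDerivAt (fun s => 1 - h s ^ 2 - k s ^ 2) (-2 * k t * (h t + k')) t :=
  (((hh.fun_pow 2).const_sub 1).fun_sub (hk.fun_pow 2)).congr_deriv (by push_cast; ring)

end CommRing

section Field

variable {𝕜 F : Type*} [NontriviallyNormedField 𝕜] [NontriviallyNormedField F] [NormedAlgebra 𝕜 F]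

theorem hasDerivAt_sq_div_one_sub_sq {h : 𝕜 → F} {h' : F} {t : 𝕜}
    (hh : HasDerivAt h h' t) (ht : 1 - h t ^ 2 ≠ 0) :
    HasDerivAt (fun s => h s ^ 2 / (1 - h s ^ 2)) (2 * h t * h' / (1 - h t ^ 2) ^ 2) t :=
  ((hh.fun_pow 2).fun_div ((hh.fun_pow 2).const_sub 1) ht).congr_deriv (by push_cast; ring)

theorem otsuki_hasDerivAt_zero {n : ℕ} (hn : n ≠ 0) {h h' : 𝕜 → F} {h'' : F} {t : 𝕜}
    (ht : 1 - h t ^ 2 ≠ 0) (hd1 : HasDerivAt h (h' t) t) (hd2 : HasDerivAt h' h'' t)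
    (hode : n * h t * (1 - h t ^ 2) * h'' + h' t ^ 2 +
      (1 - h t ^ 2) * (n * h t ^ 2 - 1) = 0) :
    HasDerivAt (fun s => (1 - h s ^ 2 - h' s ^ 2) ^ n * (h s ^ 2 / (1 - h s ^ 2))) 0 t := by
  refine hasDerivAt_pow_mul_zero hn (hasDerivAt_one_sub_sq_sub_sq hd1 hd2)
    (hasDerivAt_sq_div_one_sub_sq hd1 ht) ?_
  rw [← otsuki_eq_iff.1 hode]
  field_simp
  ring

end Field

theorem otsuki_first_integral_general
    {𝕜 F : Type*} [RCLike 𝕜] [NontriviallyNormedField F] [NormedAlgebra 𝕜 F]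
    {n : ℕ} (hn : n ≠ 0) {U : Set 𝕜} (hU : IsOpen U) (hU' : IsPreconnected U)
    {h h' h'' : 𝕜 → F} (hh : ∀ t ∈ U, 1 - h t ^ 2 ≠ 0)
    (hd1 : ∀ t ∈ U, HasDerivAt h (h' t) t) (hd2 : ∀ t ∈ U, HasDerivAt h' (h'' t) t)
    (hode : ∀ t ∈ U,
      n * h t * (1 - h t ^ 2) * h'' t + h' t ^ 2 + (1 - h t ^ 2) * (n * h t ^ 2 - 1) = 0) :
    ∃ K : F, ∀ t ∈ U, (1 - h t ^ 2 - h' t ^ 2) ^ n * h t ^ 2 / (1 - h t ^ 2) = K := by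
  have hderiv : ∀ t ∈ U,
      HasDerivAt (fun s => (1 - h s ^ 2 - h' s ^ 2) ^ n * h s ^ 2 / (1 - h s ^ 2)) 0 t := by
    intro t ht
    simpa only [mul_div_assoc] using
      otsuki_hasDerivAt_zero hn (hh t ht) (hd1 t ht) (hd2 t ht) (hode t ht)
  exact hU.exists_is_const_of_deriv_eq_zero hU'
    (fun t ht => (hderiv t ht).differentiableAt.differentiableWithinAt)
    (fun t ht => (hderiv t ht).deriv)

/-- For a twice-differentiable solution `h` of the Otsuki equation
`n h(1−h²)h″ + (h′)² + (1−h²)(nh²−1) = 0` with `0 < h < 1` on an open interval,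
the quantity `(1 − h² − h′²)^n · h²/(1 − h²)` is a first integral: it is
constant on the interval. -/
theorem otsuki_first_integral
    (n : ℕ) (hn : 2 ≤ n)
    (I : Set ℝ) (hI : IsOpen I) (hI' : I.OrdConnected)
    (h h' h'' : ℝ → ℝ)
    (hh_pos : ∀ θ ∈ I, 0 < h θ) (hh_lt : ∀ θ ∈ I, h θ < 1)
    (hd1 : ∀ θ ∈ I, HasDerivAt h (h' θ) θ)
    (hd2 : ∀ θ ∈ I, HasDerivAt h' (h'' θ) θ)
    (hode : ∀ θ ∈ I,
      n * h θ * (1 - h θ ^ 2) * h'' θ + (h' θ) ^ 2 +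
        (1 - h θ ^ 2) * (n * h θ ^ 2 - 1) = 0) :
    ∃ K : ℝ, ∀ θ ∈ I,
      (1 - h θ ^ 2 - (h' θ) ^ 2) ^ n * h θ ^ 2 / (1 - h θ ^ 2) = K := by
  have one_sub_sq_ne : ∀ θ ∈ I, 1 - h θ ^ 2 ≠ 0 := fun θ hθ => by
    nlinarith [hh_pos θ hθ, hh_lt θ hθ]
  exact otsuki_first_integral_general (by lia) hI hI'.isPreconnected one_sub_sq_ne hd1 hd2 hode
end
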